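/- Let B be a bivector in ℝ_{p,q,r} for which μ ≠ 0 is an eigenvalue with paired eigenvectors v₊, v₋ (eigenvalues ±μ, v₊ · v₋ ≠ 0), set B_μ := B/μ and β_μ := (v₊ ∧ v₋)/(v₊ · v₋). Then for all relevant indices j, the wedge powers W_i of B_μ satisfy W_{2j+1} = ⟨β_μ (W_{2j} + W_{2j+2})⟩_{4j+2} = β_μ ∧ W_{2j} + β_μ · W_{2j+2}; consequently si∧(B_μ) = β_μ co∧(B_μ). -/

import Mathlib

/-! Common setup: the real geometric algebra `ℝ_{p,q,r}`, grade projections `⟨·⟩_ℓ`,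
the commutator product `×`, the wedge powers `W_j`, the outer exponential and outer
trigonometric functions, the characteristic polynomial data `M_μ`, and the
complexification `ℂ ⊗ ℝ_{p,q,r}`. -/

noncomputable section

open CliffordAlgebra TensorProduct

/-- The diagonal quadratic form of signature `(p,q,r)` on `ℝⁿ`, `n = p+q+r`:
`p` basis vectors of square `+1`, `q` of square `-1`, `r` of square `0`.
`ℝ_{p,q,r} := CliffordAlgebra (sigQ p q r)`. -/
def sigQ (p q r : ℕ) : QuadraticForm ℝ (Fin (p + q + r) → ℝ) :=
  QuadraticMap.weightedSumSquares ℝ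
    (fun i : Fin (p + q + r) => if (i : ℕ) < p then (1 : ℝ) else if (i : ℕ) < p + q then -1 else 0)

variable {K : Type*} [Field K] [CharZero K] {M : Type*} [AddCommGroup M] [Module K M]

/-- The grade-`ℓ` component `⟨x⟩_ℓ` of an element of a Clifford algebra, obtained by
transporting the grading of the exterior algebra along `CliffordAlgebra.equivExterior`. -/
def gradeProj (Q : QuadraticForm K M) (ℓ : ℕ) (x : CliffordAlgebra Q) : CliffordAlgebra Q :=
  letI : Invertible (2 : K) := invertibleOfNonzero two_ne_zero
  (equivExterior Q).symm
    (DirectSum.decompose (fun n : ℕ => ⋀[K]^n M) (equivExterior Q x) ℓ : ExteriorAlgebra K M)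

/-- `x` is homogeneous of grade `ℓ`; in particular `IsGrade Q 2 B` says `B` is a bivector. -/
def IsGrade (Q : QuadraticForm K M) (ℓ : ℕ) (x : CliffordAlgebra Q) : Prop :=
  gradeProj Q ℓ x = x

/-- The commutator product `x × y := (xy - yx)/2`. -/
def cprod {Q : QuadraticForm K M} (x y : CliffordAlgebra Q) : CliffordAlgebra Q :=
  (2 : K)⁻¹ • (x * y - y * x)

/-- `W_j := (1/j!) ⟨B^j⟩_{2j}`, the normalized `j`-fold wedge power of `B`. -/
def Wj (Q : QuadraticForm K M) (B : CliffordAlgebra Q) (j : ℕ) : CliffordAlgebra Q :=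
  ((j.factorial : K)⁻¹) • gradeProj Q (2 * j) (B ^ j)

/-- `B` has effective dimension `2k`: `k` is the largest integer with `W_k ≠ 0`. -/
def HasEffDim (Q : QuadraticForm K M) (B : CliffordAlgebra Q) (k : ℕ) : Prop :=
  Wj Q B k ≠ 0 ∧ ∀ j, k < j → Wj Q B j = 0

/-- The outer exponential `Λ^B = Σ_{j≥0} W_j`; `n` is any bound beyond which all the `W_j`
vanish (e.g. the dimension of the underlying space), so the sum is complete. -/
def outerExp (Q : QuadraticForm K M) (n : ℕ) (B : CliffordAlgebra Q) : CliffordAlgebra Q :=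
  ∑ j ∈ Finset.range (n + 1), Wj Q B j

/-- The outer cosine `co∧(B) := (Λ^B + Λ^{-B})/2`. -/
def coW (Q : QuadraticForm K M) (n : ℕ) (B : CliffordAlgebra Q) : CliffordAlgebra Q :=
  (2 : K)⁻¹ • (outerExp Q n B + outerExp Q n (-B))

/-- The outer sine `si∧(B) := (Λ^B - Λ^{-B})/2`. -/
def siW (Q : QuadraticForm K M) (n : ℕ) (B : CliffordAlgebra Q) : CliffordAlgebra Q :=
  (2 : K)⁻¹ • (outerExp Q n B - outerExp Q n (-B))

/-- `M_μ := Σ_{j=0}^k (-μ)^{k-j} W_j`; the characteristic polynomial of `B` is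
`P_{2k}(μ) = M_μ * reverse M_μ`. -/
def Mpoly (Q : QuadraticForm K M) (B : CliffordAlgebra Q) (k : ℕ) (μ : K) : CliffordAlgebra Q :=
  ∑ j ∈ Finset.range (k + 1), (-μ) ^ (k - j) • Wj Q B j

/-- The wedge (outer) product, `X ∧ Y := ⟨XY⟩_{i+j}` on homogeneous elements of grades `i`, `j`,
extended bilinearly; `n` bounds the occurring grades. -/
def wedgeProd (Q : QuadraticForm K M) (n : ℕ) (x y : CliffordAlgebra Q) : CliffordAlgebra Q :=
  ∑ i ∈ Finset.range (n + 1), ∑ j ∈ Finset.range (n + 1),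
    gradeProj Q (i + j) (gradeProj Q i x * gradeProj Q j y)

/-- The dot product of two vectors, `u · v = ⟨uv⟩₀ = polar(Q)(u,v)/2`, as a scalar. -/
def vdot (Q : QuadraticForm K M) (u v : M) : K := (2 : K)⁻¹ * QuadraticMap.polar Q u v

/-- The complexified quadratic form of signature `(p,q,r)`. -/
def sigQc (p q r : ℕ) : QuadraticForm ℂ (ℂ ⊗[ℝ] (Fin (p + q + r) → ℝ)) :=
  letI : Invertible (2 : ℝ) := invertibleOfNonzero two_ne_zero
  (sigQ p q r).baseChange ℂ

/-- The canonical embedding of `ℝ_{p,q,r}` into its complexification `ℂ ⊗ ℝ_{p,q,r}`. -/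
def toC (p q r : ℕ) (x : CliffordAlgebra (sigQ p q r)) : CliffordAlgebra (sigQc p q r) :=
  letI : Invertible (2 : ℝ) := invertibleOfNonzero two_ne_zero
  ofBaseChange ℂ (sigQ p q r) ((1 : ℂ) ⊗ₜ x)

/-- `v` is an eigenvector of the bivector `B` with eigenvalue `μ`: `v ≠ 0` and `B × v = μ v`. -/
def IsEigen (Q : QuadraticForm K M) (B : CliffordAlgebra Q) (μ : K) (v : M) : Prop :=
  v ≠ 0 ∧ cprod B (ι Q v) = μ • ι Q v

end

/-! The equivalence with the exterior algebra turns left multiplication by a vector `v` into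
`v ∧ · + v ⌋ ·`. If `C × v = v` then `v ⌋ W_{j+1} = -v ∧ W_j`, because contraction by `v` acts on
powers of the bivector `C` as a derivation. Hence `v Λ^C` telescopes to zero. Applied to `v₊` and
`C = B_μ`, and to `v₋` and `C = -B_μ`, this says that `Λ^{B_μ}` and `Λ^{-B_μ}` are eigenvectors of
left multiplication by `β_μ` with eigenvalues `1` and `-1`, and adding the two relations gives
`si∧(B_μ) = β_μ co∧(B_μ)`.

For the graded identity, `⟨(v₊ ∧ v₋) W_i⟩_{2i+2} = v₊ ∧ v₋ ∧ W_i`, while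
`⟨(v₊ ∧ v₋) W_{i+2}⟩_{2i+2} = v₊ ⌋ (v₋ ⌋ W_{i+2}) = v₊ ⌋ (v₋ ∧ W_{i+1})
= (v₊ · v₋) W_{i+1} - v₊ ∧ v₋ ∧ W_i`. -/

section ExteriorAlgebra

open CliffordAlgebra

variable {R M : Type*} [CommRing R] [AddCommGroup M] [Module R M]

/-- The projection of the exterior algebra onto its grade-`l` part, as a linear endomorphism. -/
noncomputable def exteriorProj (l : ℕ) : ExteriorAlgebra R M →ₗ[R] ExteriorAlgebra R M :=
  GradedAlgebra.proj (fun n : ℕ => ⋀[R]^n M) l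

theorem exteriorProj_mem (l : ℕ) (x : ExteriorAlgebra R M) : exteriorProj l x ∈ ⋀[R]^l M :=
  SetLike.coe_mem (DirectSum.decompose (fun n : ℕ => ⋀[R]^n M) x l)

theorem exteriorProj_of_mem {l : ℕ} {x : ExteriorAlgebra R M} (hx : x ∈ ⋀[R]^l M) :
    exteriorProj l x = x :=
  DirectSum.decompose_of_mem_same (fun n : ℕ => ⋀[R]^n M) hx

theorem exteriorProj_of_mem_ne {l m : ℕ} {x : ExteriorAlgebra R M} (hx : x ∈ ⋀[R]^m M)
    (hml : m ≠ l) : exteriorProj l x = 0 :=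
  DirectSum.decompose_of_mem_ne (fun n : ℕ => ⋀[R]^n M) hx hml

theorem exteriorProj_add_mul_of_mem {i : ℕ} {x : ExteriorAlgebra R M} (hx : x ∈ ⋀[R]^i M) (l : ℕ)
    (y : ExteriorAlgebra R M) : exteriorProj (i + l) (x * y) = x * exteriorProj l y :=
  DirectSum.coe_decompose_mul_add_of_left_mem (fun n : ℕ => ⋀[R]^n M) hx

theorem exterior_ι_mem_exteriorPower_one (v : M) : ExteriorAlgebra.ι R v ∈ ⋀[R]^1 M := by
  rw [ExteriorAlgebra.exteriorPower, pow_one]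
  exact LinearMap.mem_range_self _ v

theorem exterior_ι_mul_ι_mem_exteriorPower_two (u v : M) :
    ExteriorAlgebra.ι R u * ExteriorAlgebra.ι R v ∈ ⋀[R]^2 M :=
  SetLike.mul_mem_graded (A := fun n : ℕ => ⋀[R]^n M)
    (exterior_ι_mem_exteriorPower_one u) (exterior_ι_mem_exteriorPower_one v)

theorem pow_mem_exteriorPower {i : ℕ} {x : ExteriorAlgebra R M} (hx : x ∈ ⋀[R]^i M) (j : ℕ) :
    x ^ j ∈ ⋀[R]^(j * i) M :=
  SetLike.pow_mem_graded (A := fun n : ℕ => ⋀[R]^n M) j hx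

theorem exteriorProj_succ_ι_mul (l : ℕ) (v : M) (x : ExteriorAlgebra R M) :
    exteriorProj (l + 1) (ExteriorAlgebra.ι R v * x)
      = ExteriorAlgebra.ι R v * exteriorProj l x := by
  rw [add_comm l, exteriorProj_add_mul_of_mem (exterior_ι_mem_exteriorPower_one v)]

theorem exteriorProj_zero_ι_mul (v : M) (x : ExteriorAlgebra R M) :
    exteriorProj 0 (ExteriorAlgebra.ι R v * x) = 0 :=
  DirectSum.coe_decompose_mul_of_left_mem_of_not_le (fun n : ℕ => ⋀[R]^n M)
    (exterior_ι_mem_exteriorPower_one v) (by simp)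

theorem contractLeft_eq_zero_of_mem_exteriorPower_zero (d : Module.Dual R M)
    {x : ExteriorAlgebra R M} (hx : x ∈ ⋀[R]^0 M) : contractLeft d x = 0 := by
  rw [ExteriorAlgebra.exteriorPower, pow_zero] at hx
  obtain ⟨r, rfl⟩ := Submodule.mem_one.mp hx
  exact contractLeft_algebraMap 0 d r

theorem exteriorProj_contractLeft (d : Module.Dual R M) (l : ℕ) (x : ExteriorAlgebra R M) :
    exteriorProj l (contractLeft d x) = contractLeft d (exteriorProj (l + 1) x) := by
  induction x using CliffordAlgebra.left_induction generalizing l with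
  | algebraMap r =>
    have hr : algebraMap R (ExteriorAlgebra R M) r ∈ ⋀[R]^0 M :=
      SetLike.algebraMap_mem_graded (fun n : ℕ => ⋀[R]^n M) r
    rw [exteriorProj_of_mem_ne hr (Nat.succ_ne_zero l).symm, contractLeft_algebraMap, map_zero,
      map_zero]
  | add x y hx hy => rw [map_add, map_add, hx, hy, map_add, map_add]
  | ι_mul x v ih =>
    rw [exteriorProj_succ_ι_mul, contractLeft_ι_mul, contractLeft_ι_mul, map_sub, map_smul]
    cases l with
    | zero =>
      rw [exteriorProj_zero_ι_mul,
        contractLeft_eq_zero_of_mem_exteriorPower_zero d (exteriorProj_mem 0 x), mul_zero]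
    | succ l => rw [exteriorProj_succ_ι_mul, ih]

theorem exterior_ι_mul_ι_eq_neg (u v : M) : ExteriorAlgebra.ι R u * ExteriorAlgebra.ι R v
    = -(ExteriorAlgebra.ι R v * ExteriorAlgebra.ι R u) :=
  eq_neg_of_add_eq_zero_left (ExteriorAlgebra.ι_add_mul_swap u v)

@[elab_as_elim]
theorem exteriorPower_two_induction {P : ExteriorAlgebra R M → Prop}
    (ι_mul_ι : ∀ u v : M, P (ExteriorAlgebra.ι R u * ExteriorAlgebra.ι R v))
    (add : ∀ x y, P x → P y → P (x + y)) {c : ExteriorAlgebra R M} (hc : c ∈ ⋀[R]^2 M) : P c := by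
  rw [ExteriorAlgebra.exteriorPower, pow_two] at hc
  refine Submodule.mul_induction_on hc ?_ add
  rintro _ ⟨u, rfl⟩ _ ⟨v, rfl⟩
  exact ι_mul_ι u v

theorem exterior_ι_commute_of_mem_exteriorPower_two (v : M) {c : ExteriorAlgebra R M}
    (hc : c ∈ ⋀[R]^2 M) : Commute (ExteriorAlgebra.ι R v) c := by
  refine exteriorPower_two_induction (fun u w => ?_) (fun _ _ => Commute.add_right) hc
  rw [commute_iff_eq, ← mul_assoc, exterior_ι_mul_ι_eq_neg v u, neg_mul, mul_assoc,
    exterior_ι_mul_ι_eq_neg v w, mul_neg, neg_neg, mul_assoc]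

theorem contractLeft_mul_of_mem_exteriorPower_two (d : Module.Dual R M)
    {c : ExteriorAlgebra R M} (hc : c ∈ ⋀[R]^2 M) (x : ExteriorAlgebra R M) :
    contractLeft d (c * x) = contractLeft d c * x + c * contractLeft d x := by
  refine exteriorPower_two_induction (fun u w => ?_) (fun y z hy hz => ?_) hc
  · rw [mul_assoc]
    simp only [contractLeft_ι_mul, contractLeft_ι, Algebra.algebraMap_eq_smul_one, mul_sub,
      sub_mul, mul_assoc, smul_mul_assoc, mul_smul_comm, mul_one]
    abel
  · rw [add_mul, map_add, hy, hz, map_add, add_mul, add_mul]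
    abel

theorem contractLeft_pow_succ_of_mem_exteriorPower_two {d : Module.Dual R M}
    {c : ExteriorAlgebra R M} (hc : c ∈ ⋀[R]^2 M) {v : M}
    (hd : contractLeft d c = ExteriorAlgebra.ι R v) (n : ℕ) :
    contractLeft d (c ^ (n + 1)) = (n + 1) • (ExteriorAlgebra.ι R v * c ^ n) := by
  induction n with
  | zero => rw [zero_add, pow_one, hd, pow_zero, mul_one, one_smul]
  | succ n ih =>
    rw [pow_succ', contractLeft_mul_of_mem_exteriorPower_two d hc, ih, hd, mul_smul_comm,
      ← mul_assoc c, ← (exterior_ι_commute_of_mem_exteriorPower_two v hc).eq, mul_assoc,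
      ← pow_succ', succ_nsmul' _ (n + 1)]

end ExteriorAlgebra

section CliffordAlgebra

open CliffordAlgebra

variable {K M : Type*} [Field K] [AddCommGroup M] [Module K M]

/-- The dot product `vdot` as a bilinear form, so that `vdotForm Q v` is the functional by which
one contracts with the vector `v`. -/
def vdotForm (Q : QuadraticForm K M) : M →ₗ[K] Module.Dual K M :=
  (2 : K)⁻¹ • Q.polarBilin

theorem vdotForm_apply (Q : QuadraticForm K M) (u v : M) : vdotForm Q u v = vdot Q u v := rfl

theorem vdot_comm (Q : QuadraticForm K M) (u v : M) : vdot Q u v = vdot Q v u := by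
  rw [vdot, vdot, QuadraticMap.polar_comm]

theorem cprod_add_left {Q : QuadraticForm K M} (x y z : CliffordAlgebra Q) :
    cprod (x + y) z = cprod x z + cprod y z := by
  simp only [cprod, add_mul, mul_add, ← smul_add, add_sub_add_comm]

theorem cprod_smul_left {Q : QuadraticForm K M} (a : K) (x y : CliffordAlgebra Q) :
    cprod (a • x) y = a • cprod x y := by
  simp only [cprod, smul_mul_assoc, mul_smul_comm, ← smul_sub, smul_comm a]

theorem IsEigen.cprod_smul {Q : QuadraticForm K M} {B : CliffordAlgebra Q} {t : K} {v : M}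
    (hv : IsEigen Q B t v) (a : K) : cprod (a • B) (ι Q v) = (a * t) • ι Q v := by
  rw [cprod_smul_left, hv.2, smul_smul]

variable [CharZero K]

/-- The linear equivalence with the exterior algebra underlying `gradeProj`, with the
invertibility of `2` supplied by characteristic zero. -/
noncomputable def toExterior (Q : QuadraticForm K M) :
    CliffordAlgebra Q ≃ₗ[K] ExteriorAlgebra K M :=
  letI : Invertible (2 : K) := invertibleOfNonzero two_ne_zero
  equivExterior Q

theorem ι_mul_ι_eq_vdot_sub (Q : QuadraticForm K M) (u v : M) :
    ι Q u * ι Q v = (2 * vdot Q u v) • 1 - ι Q v * ι Q u := by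
  rw [ι_mul_ι_comm, Algebra.algebraMap_eq_smul_one, vdot, mul_inv_cancel_left₀ two_ne_zero]

theorem toExterior_ι (Q : QuadraticForm K M) (v : M) :
    toExterior Q (ι Q v) = ExteriorAlgebra.ι K v :=
  letI : Invertible (2 : K) := invertibleOfNonzero two_ne_zero
  changeForm_ι (Q := Q) changeForm.associated_neg_proof v

theorem toExterior_algebraMap (Q : QuadraticForm K M) (a : K) :
    toExterior Q (algebraMap K _ a) = algebraMap K _ a :=
  letI : Invertible (2 : K) := invertibleOfNonzero two_ne_zero
  changeForm_algebraMap (Q := Q) changeForm.associated_neg_proof a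

theorem toExterior_ι_mul (Q : QuadraticForm K M) (v : M) (x : CliffordAlgebra Q) :
    toExterior Q (ι Q v * x)
      = ExteriorAlgebra.ι K v * toExterior Q x + contractLeft (vdotForm Q v) (toExterior Q x) := by
  let : Invertible (2 : K) := invertibleOfNonzero two_ne_zero
  have hform : vdotForm Q v = -QuadraticMap.associated (R := K) (-Q) v := by
    ext w
    simp [vdotForm_apply, vdot, QuadraticMap.associated_apply, QuadraticMap.polar]
  rw [hform, map_neg, LinearMap.neg_apply, ← sub_eq_add_neg]
  exact changeForm_ι_mul (Q := Q) changeForm.associated_neg_proof v x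

theorem toExterior_gradeProj (Q : QuadraticForm K M) (l : ℕ) (x : CliffordAlgebra Q) :
    toExterior Q (gradeProj Q l x) = exteriorProj l (toExterior Q x) :=
  (toExterior Q).apply_symm_apply _

theorem gradeProj_add (Q : QuadraticForm K M) (l : ℕ) (x y : CliffordAlgebra Q) :
    gradeProj Q l (x + y) = gradeProj Q l x + gradeProj Q l y := by
  apply (toExterior Q).injective
  simp only [map_add, toExterior_gradeProj]

theorem gradeProj_smul (Q : QuadraticForm K M) (l : ℕ) (a : K) (x : CliffordAlgebra Q) :
    gradeProj Q l (a • x) = a • gradeProj Q l x := by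
  apply (toExterior Q).injective
  simp only [map_smul, toExterior_gradeProj]

theorem isGrade_iff_toExterior_mem {Q : QuadraticForm K M} {l : ℕ} {x : CliffordAlgebra Q} :
    IsGrade Q l x ↔ toExterior Q x ∈ ⋀[K]^l M := by
  rw [IsGrade, ← (toExterior Q).injective.eq_iff, toExterior_gradeProj]
  exact ⟨fun h => h ▸ exteriorProj_mem l _, exteriorProj_of_mem⟩

namespace IsGrade

theorem add {Q : QuadraticForm K M} {l : ℕ} {x y : CliffordAlgebra Q} (hx : IsGrade Q l x)
    (hy : IsGrade Q l y) : IsGrade Q l (x + y) := by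
  rw [IsGrade, gradeProj_add, hx, hy]

theorem smul {Q : QuadraticForm K M} {l : ℕ} {x : CliffordAlgebra Q} (a : K)
    (hx : IsGrade Q l x) : IsGrade Q l (a • x) := by
  rw [IsGrade, gradeProj_smul, hx]

theorem gradeProj_of_ne {Q : QuadraticForm K M} {l m : ℕ} {x : CliffordAlgebra Q}
    (hx : IsGrade Q m x) (hml : m ≠ l) : gradeProj Q l x = 0 := by
  apply (toExterior Q).injective
  rw [toExterior_gradeProj, map_zero,
    exteriorProj_of_mem_ne (isGrade_iff_toExterior_mem.mp hx) hml]

theorem eq_zero_of_finrank_lt [Module.Finite K M] {Q : QuadraticForm K M} {l : ℕ}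
    {x : CliffordAlgebra Q} (hx : IsGrade Q l x) (hl : Module.finrank K M < l) : x = 0 := by
  have hdim : Module.finrank K (⋀[K]^l M) = 0 := by
    rw [exteriorPower.finrank_eq, Nat.choose_eq_zero_of_lt hl]
  have hbot : ⋀[K]^l M = ⊥ := Submodule.finrank_eq_zero.mp hdim
  rwa [isGrade_iff_toExterior_mem, hbot, Submodule.mem_bot, LinearEquiv.map_eq_zero_iff] at hx

end IsGrade

theorem isGrade_gradeProj (Q : QuadraticForm K M) (l : ℕ) (x : CliffordAlgebra Q) :
    IsGrade Q l (gradeProj Q l x) := by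
  rw [isGrade_iff_toExterior_mem, toExterior_gradeProj]
  exact exteriorProj_mem l _

theorem gradeProj_two_ι_mul_ι (Q : QuadraticForm K M) (u v : M) :
    gradeProj Q 2 (ι Q u * ι Q v) = ι Q u * ι Q v - vdot Q u v • 1 := by
  apply (toExterior Q).injective
  have hscalar : algebraMap K (ExteriorAlgebra K M) (vdot Q u v) ∈ ⋀[K]^0 M :=
    SetLike.algebraMap_mem_graded (fun n : ℕ => ⋀[K]^n M) _
  rw [toExterior_gradeProj, map_sub, ← Algebra.algebraMap_eq_smul_one, toExterior_algebraMap,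
    toExterior_ι_mul, toExterior_ι, contractLeft_ι, vdotForm_apply, map_add,
    exteriorProj_of_mem (exterior_ι_mul_ι_mem_exteriorPower_two u v),
    exteriorProj_of_mem_ne hscalar two_ne_zero.symm, add_zero, add_sub_cancel_right]

theorem toExterior_gradeProj_two_ι_mul_ι (Q : QuadraticForm K M) (u v : M) :
    toExterior Q (gradeProj Q 2 (ι Q u * ι Q v))
      = ExteriorAlgebra.ι K u * ExteriorAlgebra.ι K v := by
  rw [gradeProj_two_ι_mul_ι, map_sub, ← Algebra.algebraMap_eq_smul_one, toExterior_algebraMap,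
    toExterior_ι_mul, toExterior_ι, contractLeft_ι, vdotForm_apply, add_sub_cancel_right]

theorem gradeProj_two_ι_mul_ι_swap (Q : QuadraticForm K M) (u v : M) :
    gradeProj Q 2 (ι Q u * ι Q v) = -gradeProj Q 2 (ι Q v * ι Q u) := by
  apply (toExterior Q).injective
  rw [map_neg, toExterior_gradeProj_two_ι_mul_ι, toExterior_gradeProj_two_ι_mul_ι,
    exterior_ι_mul_ι_eq_neg]

theorem gradeProj_two_ι_mul_ι_eq_cprod (Q : QuadraticForm K M) (u v : M) :
    gradeProj Q 2 (ι Q u * ι Q v) = cprod (ι Q u) (ι Q v) := by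
  rw [gradeProj_two_ι_mul_ι, cprod, ι_mul_ι_eq_vdot_sub Q v u, vdot_comm Q v u]
  module

@[elab_as_elim]
theorem IsGrade.two_induction {Q : QuadraticForm K M} {P : CliffordAlgebra Q → Prop}
    (wedge : ∀ u v : M, P (gradeProj Q 2 (ι Q u * ι Q v)))
    (add : ∀ x y, P x → P y → P (x + y)) {C : CliffordAlgebra Q} (hC : IsGrade Q 2 C) : P C := by
  suffices h : P ((toExterior Q).symm (toExterior Q C)) by
    rwa [LinearEquiv.symm_apply_apply] at h
  refine exteriorPower_two_induction (P := fun c => P ((toExterior Q).symm c))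
    (fun u v => ?_) (fun c d hc hd => ?_) (isGrade_iff_toExterior_mem.mp hC)
  · rw [← toExterior_gradeProj_two_ι_mul_ι Q, LinearEquiv.symm_apply_apply]
    exact wedge u v
  · rw [map_add]
    exact add _ _ hc hd

theorem IsGrade.map_two {L N : Type*} [Field L] [CharZero L] [Algebra K L] [AddCommGroup N]
    [Module K N] [Module L N] [IsScalarTower K L N] {Q : QuadraticForm K M}
    {Q' : QuadraticForm L N} (f : CliffordAlgebra Q →ₐ[K] CliffordAlgebra Q')
    (hf : ∀ v, ∃ w, f (ι Q v) = ι Q' w) {B : CliffordAlgebra Q} (hB : IsGrade Q 2 B) :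
    IsGrade Q' 2 (f B) := by
  refine IsGrade.two_induction (fun u v => ?_) (fun x y hx hy => ?_) hB
  · obtain ⟨u', hu'⟩ := hf u
    obtain ⟨v', hv'⟩ := hf v
    have hmap : f (gradeProj Q 2 (ι Q u * ι Q v)) = gradeProj Q' 2 (ι Q' u' * ι Q' v') := by
      have htwo : algebraMap K L 2⁻¹ = 2⁻¹ := by rw [map_inv₀, map_ofNat]
      rw [gradeProj_two_ι_mul_ι_eq_cprod, gradeProj_two_ι_mul_ι_eq_cprod, cprod, cprod, map_smul,
        map_sub, map_mul, map_mul, hu', hv', ← htwo, algebraMap_smul]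
    rw [hmap]
    exact isGrade_gradeProj Q' 2 _
  · rw [map_add]
    exact hx.add hy

theorem cprod_gradeProj_two_ι_mul_ι_ι (Q : QuadraticForm K M) (u w v : M) :
    cprod (gradeProj Q 2 (ι Q u * ι Q w)) (ι Q v)
      = vdot Q v w • ι Q u - vdot Q v u • ι Q w := by
  have hcomm : ι Q v * (ι Q u * ι Q w)
      = (2 * vdot Q v u) • ι Q w - (2 * vdot Q v w) • ι Q u + ι Q u * ι Q w * ι Q v := by
    rw [← mul_assoc, ι_mul_ι_eq_vdot_sub Q v u, sub_mul, mul_assoc (ι Q u),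
      ι_mul_ι_eq_vdot_sub Q v w, mul_sub, smul_one_mul, mul_smul_comm, mul_one, mul_assoc]
    abel
  rw [gradeProj_two_ι_mul_ι, cprod, sub_mul, mul_sub, hcomm, smul_one_mul, mul_smul_comm, mul_one]
  module

theorem contractLeft_toExterior_of_isGrade_two {Q : QuadraticForm K M} {C : CliffordAlgebra Q}
    (hC : IsGrade Q 2 C) (v : M) :
    contractLeft (vdotForm Q v) (toExterior Q C) = -toExterior Q (cprod C (ι Q v)) := by
  refine IsGrade.two_induction (fun u w => ?_) (fun x y hx hy => ?_) hC
  · rw [toExterior_gradeProj_two_ι_mul_ι, contractLeft_ι_mul, contractLeft_ι,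
      cprod_gradeProj_two_ι_mul_ι_ι, map_sub, map_smul, map_smul, toExterior_ι, toExterior_ι,
      vdotForm_apply, vdotForm_apply, Algebra.algebraMap_eq_smul_one, mul_smul_comm, mul_one,
      neg_sub]
  · rw [map_add, map_add, hx, hy, cprod_add_left, map_add, neg_add]

theorem toExterior_gradeProj_succ_ι_mul (Q : QuadraticForm K M) (l : ℕ) (v : M)
    (x : CliffordAlgebra Q) :
    toExterior Q (gradeProj Q (l + 1) (ι Q v * x))
      = ExteriorAlgebra.ι K v * toExterior Q (gradeProj Q l x)
        + contractLeft (vdotForm Q v) (toExterior Q (gradeProj Q (l + 2) x)) := by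
  simp only [toExterior_gradeProj, toExterior_ι_mul, map_add, exteriorProj_succ_ι_mul,
    exteriorProj_contractLeft]

theorem toExterior_gradeProj_wedge_mul (Q : QuadraticForm K M) (l : ℕ) (u w : M)
    (x : CliffordAlgebra Q) :
    toExterior Q (gradeProj Q (l + 2) (gradeProj Q 2 (ι Q u * ι Q w) * x))
      = ExteriorAlgebra.ι K u * (ExteriorAlgebra.ι K w * toExterior Q (gradeProj Q l x))
        + (ExteriorAlgebra.ι K u
              * contractLeft (vdotForm Q w) (toExterior Q (gradeProj Q (l + 2) x))
            - ExteriorAlgebra.ι K w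
              * contractLeft (vdotForm Q u) (toExterior Q (gradeProj Q (l + 2) x)))
        + contractLeft (vdotForm Q u)
            (contractLeft (vdotForm Q w) (toExterior Q (gradeProj Q (l + 4) x))) := by
  have hsplit : gradeProj Q 2 (ι Q u * ι Q w) * x
      = ι Q u * (ι Q w * x) + (-vdot Q u w) • x := by
    rw [gradeProj_two_ι_mul_ι, sub_mul, smul_one_mul, mul_assoc, neg_smul, sub_eq_add_neg]
  rw [hsplit, gradeProj_add, gradeProj_smul, map_add, map_smul, toExterior_gradeProj_succ_ι_mul,
    toExterior_gradeProj_succ_ι_mul, toExterior_gradeProj_succ_ι_mul, map_add, contractLeft_ι_mul,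
    vdotForm_apply, mul_add]
  module

theorem toExterior_gradeProj_bivector_mul {Q : QuadraticForm K M} {C : CliffordAlgebra Q}
    (hC : IsGrade Q 2 C) {l : ℕ} {x : CliffordAlgebra Q}
    (hx : ∀ k, l < k → gradeProj Q k x = 0) :
    toExterior Q (gradeProj Q (l + 2) (C * x))
      = toExterior Q C * toExterior Q (gradeProj Q l x) := by
  refine IsGrade.two_induction (fun u w => ?_) (fun y z hy hz => ?_) hC
  · rw [toExterior_gradeProj_wedge_mul, toExterior_gradeProj_two_ι_mul_ι, hx (l + 2) (by omega),
      hx (l + 4) (by omega)]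
    simp only [map_zero, mul_zero, sub_zero, add_zero, mul_assoc]
  · rw [add_mul, gradeProj_add, map_add, hy, hz, map_add, add_mul]

theorem toExterior_gradeProj_pow {Q : QuadraticForm K M} {C : CliffordAlgebra Q}
    (hC : IsGrade Q 2 C) (j : ℕ) {l : ℕ} (hl : j * 2 ≤ l) :
    toExterior Q (gradeProj Q l (C ^ j)) = exteriorProj l (toExterior Q C ^ j) := by
  have hc := isGrade_iff_toExterior_mem.mp hC
  induction j generalizing l with
  | zero => rw [toExterior_gradeProj, pow_zero, pow_zero, ← map_one (algebraMap K _),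
      toExterior_algebraMap, map_one]
  | succ j ih =>
    obtain ⟨l, rfl⟩ : ∃ m, l = m + 2 := ⟨l - 2, by omega⟩
    have hvanish : ∀ k, l < k → gradeProj Q k (C ^ j) = 0 := fun k hk => by
      apply (toExterior Q).injective
      rw [ih (by omega), exteriorProj_of_mem_ne (pow_mem_exteriorPower hc j) (by omega), map_zero]
    rw [pow_succ', toExterior_gradeProj_bivector_mul hC hvanish, ih (by omega), pow_succ',
      add_comm l, exteriorProj_add_mul_of_mem hc]

theorem toExterior_Wj {Q : QuadraticForm K M} {C : CliffordAlgebra Q} (hC : IsGrade Q 2 C)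
    (j : ℕ) : toExterior Q (Wj Q C j) = (j.factorial : K)⁻¹ • toExterior Q C ^ j := by
  have hmem := pow_mem_exteriorPower (isGrade_iff_toExterior_mem.mp hC) j
  rw [Wj, map_smul, mul_comm 2 j, toExterior_gradeProj_pow hC j le_rfl, exteriorProj_of_mem hmem]

theorem isGrade_Wj (Q : QuadraticForm K M) (C : CliffordAlgebra Q) (j : ℕ) :
    IsGrade Q (2 * j) (Wj Q C j) :=
  (isGrade_gradeProj Q (2 * j) _).smul _

theorem Wj_smul (Q : QuadraticForm K M) (a : K) (C : CliffordAlgebra Q) (j : ℕ) :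
    Wj Q (a • C) j = a ^ j • Wj Q C j := by
  rw [Wj, Wj, smul_pow, gradeProj_smul, smul_comm]

theorem Wj_eq_zero_of_finrank_lt [Module.Finite K M] (Q : QuadraticForm K M)
    (C : CliffordAlgebra Q) {j : ℕ} (hj : Module.finrank K M < 2 * j) : Wj Q C j = 0 :=
  (isGrade_Wj Q C j).eq_zero_of_finrank_lt hj

theorem contractLeft_toExterior_Wj_succ {Q : QuadraticForm K M} {C : CliffordAlgebra Q}
    (hC : IsGrade Q 2 C) {t : K} {v : M} (hv : cprod C (ι Q v) = t • ι Q v) (j : ℕ) :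
    contractLeft (vdotForm Q v) (toExterior Q (Wj Q C (j + 1)))
      = -t • (ExteriorAlgebra.ι K v * toExterior Q (Wj Q C j)) := by
  have hcontract : contractLeft (vdotForm Q v) (toExterior Q C) = ExteriorAlgebra.ι K (-t • v) := by
    rw [contractLeft_toExterior_of_isGrade_two hC, hv, map_smul, toExterior_ι, map_smul, neg_smul]
  have hfactorial : ((j + 1).factorial : K)⁻¹ * (j + 1 : ℕ) = (j.factorial : K)⁻¹ := by
    have hj : ((j + 1 : ℕ) : K) ≠ 0 := Nat.cast_ne_zero.mpr j.succ_ne_zero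
    rw [Nat.factorial_succ, Nat.cast_mul, mul_inv_rev, inv_mul_cancel_right₀ hj]
  rw [toExterior_Wj hC, toExterior_Wj hC, map_smul,
    contractLeft_pow_succ_of_mem_exteriorPower_two (isGrade_iff_toExterior_mem.mp hC) hcontract,
    ← Nat.cast_smul_eq_nsmul K, smul_smul, hfactorial, map_smul, smul_mul_assoc, mul_smul_comm,
    smul_comm]

theorem contractLeft_contractLeft_toExterior_Wj {Q : QuadraticForm K M} {C : CliffordAlgebra Q}
    (hC : IsGrade Q 2 C) {u v : M} (hu : cprod C (ι Q u) = ι Q u) (hv : cprod C (ι Q v) = -ι Q v)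
    (i : ℕ) :
    contractLeft (vdotForm Q u) (contractLeft (vdotForm Q v) (toExterior Q (Wj Q C (i + 2))))
      = vdot Q u v • toExterior Q (Wj Q C (i + 1))
        - ExteriorAlgebra.ι K u * (ExteriorAlgebra.ι K v * toExterior Q (Wj Q C i)) := by
  rw [contractLeft_toExterior_Wj_succ hC (hv.trans (neg_one_smul K _).symm), neg_neg, one_smul,
    contractLeft_ι_mul, contractLeft_toExterior_Wj_succ hC (hu.trans (one_smul K _).symm),
    neg_one_smul, mul_neg, vdotForm_apply, ← mul_assoc,
    exterior_ι_mul_ι_eq_neg v u, neg_mul, neg_neg, mul_assoc]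

theorem smul_Wj_succ_eq_gradeProj_wedge_mul {Q : QuadraticForm K M} {C : CliffordAlgebra Q}
    (hC : IsGrade Q 2 C) {u v : M} (hu : cprod C (ι Q u) = ι Q u) (hv : cprod C (ι Q v) = -ι Q v)
    (i : ℕ) :
    vdot Q u v • Wj Q C (i + 1)
      = gradeProj Q (2 * i + 2) (gradeProj Q 2 (ι Q u * ι Q v) * Wj Q C i)
        + gradeProj Q (2 * i + 2) (gradeProj Q 2 (ι Q u * ι Q v) * Wj Q C (i + 2)) := by
  have hwedge : toExterior Q (gradeProj Q (2 * i + 2) (gradeProj Q 2 (ι Q u * ι Q v) * Wj Q C i))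
      = ExteriorAlgebra.ι K u * (ExteriorAlgebra.ι K v * toExterior Q (Wj Q C i)) := by
    rw [toExterior_gradeProj_bivector_mul (isGrade_gradeProj Q 2 _)
      (fun _ hk => (isGrade_Wj Q C i).gradeProj_of_ne hk.ne), toExterior_gradeProj_two_ι_mul_ι,
      isGrade_Wj Q C i, mul_assoc]
  have hdot : toExterior Q
        (gradeProj Q (2 * i + 2) (gradeProj Q 2 (ι Q u * ι Q v) * Wj Q C (i + 2)))
      = contractLeft (vdotForm Q u)
          (contractLeft (vdotForm Q v) (toExterior Q (Wj Q C (i + 2)))) := by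
    rw [toExterior_gradeProj_wedge_mul, (isGrade_Wj Q C (i + 2)).gradeProj_of_ne (by omega),
      (isGrade_Wj Q C (i + 2)).gradeProj_of_ne (by omega),
      show 2 * i + 4 = 2 * (i + 2) by omega, isGrade_Wj Q C (i + 2)]
    simp only [map_zero, mul_zero, sub_zero, zero_add]
  apply (toExterior Q).injective
  rw [map_add, map_smul, hwedge, hdot, contractLeft_contractLeft_toExterior_Wj hC hu hv,
    add_sub_cancel]

theorem toExterior_ι_mul_outerExp {Q : QuadraticForm K M} {C : CliffordAlgebra Q}
    (hC : IsGrade Q 2 C) {v : M} (hv : cprod C (ι Q v) = ι Q v) (n : ℕ) :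
    toExterior Q (ι Q v * outerExp Q n C)
      = ExteriorAlgebra.ι K v * toExterior Q (Wj Q C n) := by
  have hcontract : ∀ j, contractLeft (vdotForm Q v) (toExterior Q (Wj Q C (j + 1)))
      = -(ExteriorAlgebra.ι K v * toExterior Q (Wj Q C j)) := fun j => by
    rw [contractLeft_toExterior_Wj_succ hC (hv.trans (one_smul K _).symm), neg_one_smul]
  induction n with
  | zero =>
    rw [outerExp, zero_add, Finset.sum_range_one, toExterior_ι_mul,
      contractLeft_eq_zero_of_mem_exteriorPower_zero _
        (isGrade_iff_toExterior_mem.mp (isGrade_Wj Q C 0)), add_zero]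
  | succ n ih =>
    rw [outerExp] at ih ⊢
    rw [Finset.sum_range_succ, mul_add, map_add, ih, toExterior_ι_mul, hcontract]
    abel

theorem ι_mul_outerExp_eq_zero {Q : QuadraticForm K M} {C : CliffordAlgebra Q}
    (hC : IsGrade Q 2 C) {v : M} (hv : cprod C (ι Q v) = ι Q v) {n : ℕ}
    (hn : Wj Q C (n + 1) = 0) : ι Q v * outerExp Q n C = 0 := by
  have hcontract := contractLeft_toExterior_Wj_succ hC (hv.trans (one_smul K _).symm) n
  rw [hn, map_zero, map_zero, neg_one_smul, zero_eq_neg] at hcontract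
  rwa [← LinearEquiv.map_eq_zero_iff (toExterior Q), toExterior_ι_mul_outerExp hC hv]

theorem gradeProj_wedge_mul_of_right_ι_mul_eq_zero {Q : QuadraticForm K M} {v : M}
    {x : CliffordAlgebra Q} (hx : ι Q v * x = 0) (u : M) :
    gradeProj Q 2 (ι Q u * ι Q v) * x = -(vdot Q u v • x) := by
  rw [gradeProj_two_ι_mul_ι, sub_mul, mul_assoc, hx, mul_zero, zero_sub, smul_one_mul]

theorem gradeProj_wedge_mul_of_left_ι_mul_eq_zero {Q : QuadraticForm K M} {u : M}
    {x : CliffordAlgebra Q} (hx : ι Q u * x = 0) (v : M) :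
    gradeProj Q 2 (ι Q u * ι Q v) * x = vdot Q u v • x := by
  rw [gradeProj_two_ι_mul_ι_swap, neg_mul, gradeProj_wedge_mul_of_right_ι_mul_eq_zero hx, neg_neg,
    vdot_comm]

theorem gradeProj_wedge_mul_coW {Q : QuadraticForm K M} {C : CliffordAlgebra Q}
    (hC : IsGrade Q 2 C) {u v : M} (hu : cprod C (ι Q u) = ι Q u) (hv : cprod C (ι Q v) = -ι Q v)
    {n : ℕ} (hn : Wj Q C (n + 1) = 0) :
    gradeProj Q 2 (ι Q u * ι Q v) * coW Q n C = vdot Q u v • siW Q n C := by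
  have hu_exp : ι Q u * outerExp Q n C = 0 := ι_mul_outerExp_eq_zero hC hu hn
  have hv_exp : ι Q v * outerExp Q n (-C) = 0 := by
    rw [← neg_one_smul K C]
    refine ι_mul_outerExp_eq_zero (hC.smul _) ?_ ?_
    · rw [cprod_smul_left, hv, neg_one_smul, neg_neg]
    · rw [Wj_smul, hn, smul_zero]
  rw [coW, siW, mul_smul_comm, mul_add, gradeProj_wedge_mul_of_left_ι_mul_eq_zero hu_exp,
    gradeProj_wedge_mul_of_right_ι_mul_eq_zero hv_exp, ← sub_eq_add_neg, ← smul_sub, smul_comm]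

theorem si_eq_beta_mul_co_general {Q : QuadraticForm K M} {B : CliffordAlgebra Q}
    (hB : IsGrade Q 2 B) {μ : K} (hμ : μ ≠ 0) {vp vm : M} (hvp : IsEigen Q B μ vp)
    (hvm : IsEigen Q B (-μ) vm) (hd : vdot Q vp vm ≠ 0) {Bμ β : CliffordAlgebra Q}
    (hBμ : Bμ = μ⁻¹ • B) (hβ : β = (vdot Q vp vm)⁻¹ • gradeProj Q 2 (ι Q vp * ι Q vm)) {n : ℕ}
    (hn : Wj Q Bμ (n + 1) = 0) :
    (∀ i : ℕ,
      Wj Q Bμ (i + 1) = gradeProj Q (2 * i + 2) (β * (Wj Q Bμ i + Wj Q Bμ (i + 2))) ∧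
      Wj Q Bμ (i + 1) = gradeProj Q (2 * i + 2) (β * Wj Q Bμ i)
        + gradeProj Q (2 * i + 2) (β * Wj Q Bμ (i + 2))) ∧
    siW Q n Bμ = β * coW Q n Bμ := by
  have hC : IsGrade Q 2 Bμ := hBμ ▸ hB.smul μ⁻¹
  have hu : cprod Bμ (ι Q vp) = ι Q vp := by
    rw [hBμ, hvp.cprod_smul, inv_mul_cancel₀ hμ, one_smul]
  have hv : cprod Bμ (ι Q vm) = -ι Q vm := by
    rw [hBμ, hvm.cprod_smul, mul_neg, inv_mul_cancel₀ hμ, neg_one_smul]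
  have hgraded : ∀ i, Wj Q Bμ (i + 1) = gradeProj Q (2 * i + 2) (β * Wj Q Bμ i)
      + gradeProj Q (2 * i + 2) (β * Wj Q Bμ (i + 2)) := fun i => by
    rw [hβ, smul_mul_assoc, smul_mul_assoc, gradeProj_smul, gradeProj_smul, ← smul_add,
      ← smul_Wj_succ_eq_gradeProj_wedge_mul hC hu hv, inv_smul_smul₀ hd]
  refine ⟨fun i => ⟨?_, hgraded i⟩, ?_⟩
  · rw [mul_add, gradeProj_add, ← hgraded]
  · rw [hβ, smul_mul_assoc, gradeProj_wedge_mul_coW hC hu hv hn, inv_smul_smul₀ hd]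

end CliffordAlgebra

section Complexification

open CliffordAlgebra TensorProduct

theorem isGrade_two_toC {p q r : ℕ} {B : CliffordAlgebra (sigQ p q r)}
    (hB : IsGrade (sigQ p q r) 2 B) : IsGrade (sigQc p q r) 2 (toC p q r B) := by
  let : Invertible (2 : ℝ) := invertibleOfNonzero two_ne_zero
  exact hB.map_two (((ofBaseChange ℂ (sigQ p q r)).restrictScalars ℝ).comp
    Algebra.TensorProduct.includeRight) fun v => ⟨1 ⊗ₜ v, ofBaseChange_tmul_ι ℂ (sigQ p q r) 1 v⟩

theorem Wj_sigQc_eq_zero {p q r j : ℕ} (C : CliffordAlgebra (sigQc p q r))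
    (hj : p + q + r < 2 * j) : Wj (sigQc p q r) C j = 0 :=
  Wj_eq_zero_of_finrank_lt _ C (by rwa [Module.finrank_baseChange, Module.finrank_fin_fun])

end Complexification

open CliffordAlgebra TensorProduct in
/-- let `μ ≠ 0` be an eigenvalue of `B` with paired eigenvectors `v₊, v₋`
(eigenvalues `±μ`, `v₊ · v₋ ≠ 0`), set `B_μ := B/μ` and `β_μ := (v₊ ∧ v₋)/(v₊ · v₋)`.
Then for all indices `j`, the wedge powers `W_i` of `B_μ` satisfy
`W_{2j+1} = ⟨β_μ (W_{2j} + W_{2j+2})⟩_{4j+2} = β_μ ∧ W_{2j} + β_μ · W_{2j+2}`;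
consequently `si∧(B_μ) = β_μ co∧(B_μ)`. -/
theorem si_eq_beta_mul_co (p q r : ℕ) (B : CliffordAlgebra (sigQ p q r))
    (hB : IsGrade (sigQ p q r) 2 B) (k : ℕ) (hk : HasEffDim (sigQ p q r) B k)
    (μ : ℂ) (hμ : μ ≠ 0)
    (hroot : Mpoly (sigQc p q r) (toC p q r B) k μ
        * reverse (Mpoly (sigQc p q r) (toC p q r B) k μ) = 0)
    (vp vm : ℂ ⊗[ℝ] (Fin (p + q + r) → ℝ))
    (hvp : IsEigen (sigQc p q r) (toC p q r B) μ vp)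
    (hvm : IsEigen (sigQc p q r) (toC p q r B) (-μ) vm)
    (hd : vdot (sigQc p q r) vp vm ≠ 0)
    (Bμ : CliffordAlgebra (sigQc p q r)) (hBμ : Bμ = μ⁻¹ • toC p q r B)
    (β : CliffordAlgebra (sigQc p q r))
    (hβ : β = (vdot (sigQc p q r) vp vm)⁻¹ •
      gradeProj (sigQc p q r) 2 (ι (sigQc p q r) vp * ι (sigQc p q r) vm)) :
    (∀ j : ℕ,
      Wj (sigQc p q r) Bμ (2 * j + 1)
        = gradeProj (sigQc p q r) (4 * j + 2)
            (β * (Wj (sigQc p q r) Bμ (2 * j) + Wj (sigQc p q r) Bμ (2 * j + 2))) ∧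
      Wj (sigQc p q r) Bμ (2 * j + 1)
        = gradeProj (sigQc p q r) (4 * j + 2) (β * Wj (sigQc p q r) Bμ (2 * j))
          + gradeProj (sigQc p q r) (4 * j + 2) (β * Wj (sigQc p q r) Bμ (2 * j + 2))) ∧
    siW (sigQc p q r) (p + q + r) Bμ = β * coW (sigQc p q r) (p + q + r) Bμ := by
  obtain ⟨hgraded, hsi⟩ := si_eq_beta_mul_co_general (isGrade_two_toC hB) hμ hvp hvm hd hBμ hβ
    (Wj_sigQc_eq_zero Bμ (by omega : p + q + r < 2 * (p + q + r + 1)))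
  exact ⟨fun j => by simpa only [← mul_assoc, Nat.reduceMul] using hgraded (2 * j), hsi⟩
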